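/- Let 𝒮₀ be a nonempty decreasing subset of 𝒮. (a) inf_{μ∈𝒞(𝒮₀)} Λ_{δ,𝒮₀}(μ) equals the infimum over pairs (μ,E₀) with E₀∈𝒮₀, μ∈𝒫(V_S) and supp(μ|₁)⊆E₀ of [ Λ₁(μ) + Σ_{z∈∂E₀×{−1,1}} μ(z)·log( (d(z)−k(z)+k(z)·δ)/(d(z)·δ) ) ], where k(z) is computed with respect to E₀. (b) If moreover 𝒮₀≠𝒮, then the infimum in (a) is attained at some pair (μ,E₀) with μ|₁(∂E₀)>0. -/

import Mathlib

open scoped BigOperators Classical ENNReal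
open Filter Topology

noncomputable section
namespace ORRW

/-- Probability measures on a finite type `A`, topologized as a subset of `ℝ^A`. -/
abbrev ProbMeas (A : Type) [Fintype A] : Type :=
  {p : A → ℝ // (∀ a, 0 ≤ p a) ∧ ∑ a, p a = 1}

/-- Relative entropy `R(γ‖ρ)` between two finitely supported "rows", valued in `EReal`,
with `+∞` when absolute continuity fails. -/
def relEnt {A : Type} [Fintype A] (γ ρ : A → ℝ) : EReal :=
  if ∀ a, ρ a = 0 → γ a = 0 then ((∑ a, γ a * Real.log (γ a / ρ a) : ℝ) : EReal)
  else (⊤ : EReal)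

/-- `∫ R(q‖p) dν = Σ_a ν(a) · R(q(a,·)‖p(a,·))`. -/
def relEntInt {A : Type} [Fintype A] (ν : A → ℝ) (q p : A → A → ℝ) : EReal :=
  ∑ a, (ν a : EReal) * relEnt (q a) (p a)

/-- `ν` is an invariant measure of the kernel `q`. -/
def Invariant {A : Type} [Fintype A] (ν : A → ℝ) (q : A → A → ℝ) : Prop :=
  ∀ y, ∑ x, ν x * q x y = ν y

/-- Extended-real logarithm: `⊥` at nonpositive arguments. -/
def elog (x : ℝ) : EReal := if x ≤ 0 then (⊥ : EReal) else ((Real.log x : ℝ) : EReal)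

/-- Empirical measure of a finite trajectory `f : Fin (n+1) → A`. -/
def empMeas {A : Type} [Fintype A] [DecidableEq A] (n : ℕ) (f : Fin (n + 1) → A) :
    ProbMeas A :=
  ⟨fun a => ((Finset.univ.filter (fun i => f i = a)).card : ℝ) / (n + 1),
    fun a => by positivity, by
      have key : ∑ a : A, ((Finset.univ.filter (fun i => f i = a)).card) = n + 1 := by
        have h := Finset.card_eq_sum_card_fiberwise
          (s := (Finset.univ : Finset (Fin (n + 1)))) (t := (Finset.univ : Finset A))
          (f := f) (fun i _ => Finset.mem_univ (f i))
        simpa using h.symm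
      have key' : ∑ a : A, (((Finset.univ.filter (fun i => f i = a)).card : ℝ)) = (n : ℝ) + 1 := by
        have h2 := congrArg (fun m : ℕ => (m : ℝ)) key
        push_cast at h2
        simpa using h2
      rw [← Finset.sum_div, key', div_self (by positivity)]⟩

section Graph

variable {V : Type} [Fintype V] [DecidableEq V]

/-- Weight of an edge given the set `F` of already traversed edges. -/
def gw (δ : ℝ) (F : Finset (Sym2 V)) (e : Sym2 V) : ℝ := if e ∈ F then δ else 1

/-- The transition kernel `p̂_F` on `V`. -/
def phat (G : SimpleGraph V) [DecidableRel G.Adj] (δ : ℝ) (F : Finset (Sym2 V))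
    (x y : V) : ℝ :=
  if G.Adj x y then gw δ F s(x, y) / ∑ z ∈ G.neighborFinset x, gw δ F s(x, z) else 0

/-- Two edges are adjacent iff they share a vertex. -/
def edgeAdj (e e' : Sym2 V) : Prop := ∃ v, v ∈ e ∧ v ∈ e'

/-- `x` is a vertex of the edge set `F`. -/
def memVerts (F : Finset (Sym2 V)) (x : V) : Prop := ∃ e ∈ F, x ∈ e

/-- `𝒯_G`: stochastic matrices on `V` adapted to `G`. -/
def TG (G : SimpleGraph V) : Set (V → V → ℝ) :=
  {q | (∀ x y, 0 ≤ q x y) ∧ (∀ x, ∑ y, q x y = 1) ∧ ∀ x y, q x y ≠ 0 → G.Adj x y}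

/-- `𝒯(F)`: stochastic kernels from the vertex set of `F` to `V`, supported on `F`. -/
def TE (F : Finset (Sym2 V)) : Set (V → V → ℝ) :=
  {q | (∀ x y, 0 ≤ q x y) ∧ (∀ x, memVerts F x → ∑ y, q x y = 1) ∧
    ∀ x y, q x y ≠ 0 → s(x, y) ∈ F}

/-- `ℰ`: admissible increasing sequences of traversed edge sets. -/
def seqE (G : SimpleGraph V) [DecidableRel G.Adj] (v₁ : V) :
    Set (Fin G.edgeFinset.card → Finset (Sym2 V)) :=
  {Es | (∀ k, Es k ⊆ G.edgeFinset) ∧ (∀ k, (Es k).card = (k : ℕ) + 1) ∧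
    (∀ k l : Fin G.edgeFinset.card, (k : ℕ) + 1 = (l : ℕ) → Es k ⊂ Es l) ∧
    (∀ k : Fin G.edgeFinset.card, (k : ℕ) = 0 → ∃ e ∈ Es k, v₁ ∈ e) ∧
    (∀ k l : Fin G.edgeFinset.card, (k : ℕ) + 1 = (l : ℕ) →
      ∀ e ∈ Es l \ Es k, ∃ e' ∈ Es k, edgeAdj e e')}

/-- The rate function `I_δ`. -/
def Ifun (G : SimpleGraph V) [DecidableRel G.Adj] (v₁ : V) (δ : ℝ) (ν : ProbMeas V) : EReal :=
  sInf { c : EReal |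
    ∃ (νs : Fin G.edgeFinset.card → ProbMeas V) (r : Fin G.edgeFinset.card → ℝ)
      (Es : Fin G.edgeFinset.card → Finset (Sym2 V))
      (qs : Fin G.edgeFinset.card → V → V → ℝ),
      Es ∈ seqE G v₁ ∧ (∀ k, 0 ≤ r k) ∧ (∑ k, r k = 1) ∧
      (∀ k x, (νs k).1 x ≠ 0 → memVerts (Es k) x) ∧
      (∀ x, ∑ k, r k * (νs k).1 x = ν.1 x) ∧
      (∀ k, qs k ∈ TE (Es k)) ∧ (∀ k, Invariant (νs k).1 (qs k)) ∧
      c = ∑ k, ((r k : ℝ) : EReal) * relEntInt (νs k).1 (qs k) (phat G δ (Es k)) }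

/-- Edges traversed along a path, given as a list of consecutively visited vertices. -/
def pathEdges : List V → Finset (Sym2 V)
  | [] => ∅
  | [_] => ∅
  | x :: y :: t => insert s(x, y) (pathEdges (y :: t))

/-- Product of one-step ORRW transition probabilities along a trajectory,
the trajectory being listed in reverse chronological order. -/
def stepsProb (G : SimpleGraph V) [DecidableRel G.Adj] (δ : ℝ) : List V → ℝ
  | [] => 1
  | [_] => 1
  | y :: x :: t => phat G δ (pathEdges (x :: t).reverse) x y * stepsProb G δ (x :: t)

/-- The law of `(X_0, …, X_n)` for the `δ`-ORRW started at `v₁`. -/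
def trajProb (G : SimpleGraph V) [DecidableRel G.Adj] (δ : ℝ) (v₁ : V) (n : ℕ)
    (f : Fin (n + 1) → V) : ℝ :=
  if f 0 = v₁ then stepsProb G δ (List.ofFn f).reverse else 0

/-- `P_{v₁}(L_{n+1} ∈ C)`: the probability that the empirical measure of the first
`n+1` positions of the `δ`-ORRW lies in `C`. -/
def probEmp (G : SimpleGraph V) [DecidableRel G.Adj] (δ : ℝ) (v₁ : V) (n : ℕ)
    (C : Set (ProbMeas V)) : ℝ :=
  ∑ f : Fin (n + 1) → V, if empMeas n f ∈ C then trajProb G δ v₁ n f else 0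

/-- The family `𝒮` of edge sets of connected subgraphs having an edge at `v₁`. -/
def scrS (G : SimpleGraph V) [DecidableRel G.Adj] (v₁ : V) : Set (Finset (Sym2 V)) :=
  {F | F ⊆ G.edgeFinset ∧ (∃ e ∈ F, v₁ ∈ e) ∧
    ∀ x y : V, memVerts F x → memVerts F y →
      (SimpleGraph.fromEdgeSet (↑F : Set (Sym2 V))).Reachable x y}

/-- `𝒮₀` is a decreasing subset of `𝒮`. -/
def DecreasingIn (G : SimpleGraph V) [DecidableRel G.Adj] (v₁ : V)
    (S0 : Set (Finset (Sym2 V))) : Prop :=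
  ∀ F₁ F₂, F₁ ∈ scrS G v₁ → F₂ ∈ scrS G v₁ → F₁ ⊆ F₂ → F₂ ∈ S0 → F₁ ∈ S0

/-- `P_{v₁}(T_{𝒮₀} > n)`. -/
def probTgt (G : SimpleGraph V) [DecidableRel G.Adj] (δ : ℝ) (v₁ : V)
    (S0 : Set (Finset (Sym2 V))) (n : ℕ) : ℝ :=
  ∑ f : Fin (n + 1) → V,
    if ∀ k, 1 ≤ k → k ≤ n → pathEdges ((List.ofFn f).take (k + 1)) ∈ S0 then
      trajProb G δ v₁ n f
    else 0

/-- `P_{v₁}(C_E > n)` for the edge cover time `C_E`. -/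
def probCgt (G : SimpleGraph V) [DecidableRel G.Adj] (δ : ℝ) (v₁ : V) (n : ℕ) : ℝ :=
  ∑ f : Fin (n + 1) → V,
    if ¬ G.edgeFinset ⊆ pathEdges (List.ofFn f) then trajProb G δ v₁ n f else 0

/-- `E_{v₁}[exp (α T_{𝒮₀})]`, valued in `ℝ≥0∞`; the stopping time takes values in
`{1, 2, …} ∪ {∞}`. -/
def expT (G : SimpleGraph V) [DecidableRel G.Adj] (δ : ℝ) (v₁ : V)
    (S0 : Set (Finset (Sym2 V))) (α : ℝ) : ℝ≥0∞ :=
  (∑' n : ℕ, ENNReal.ofReal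
      (Real.exp (α * (n + 1)) * (probTgt G δ v₁ S0 n - probTgt G δ v₁ S0 (n + 1)))) +
    (if 0 < α then (⊤ : ℝ≥0∞) else if α = 0 then 1 else 0) *
      ENNReal.ofReal (⨅ n : ℕ, probTgt G δ v₁ S0 n)

/-- `E_{v₁}[exp (α C_E)]`, valued in `ℝ≥0∞`. -/
def expC (G : SimpleGraph V) [DecidableRel G.Adj] (δ : ℝ) (v₁ : V) (α : ℝ) : ℝ≥0∞ :=
  (∑' n : ℕ, ENNReal.ofReal
      (Real.exp (α * (n + 1)) * (probCgt G δ v₁ n - probCgt G δ v₁ (n + 1)))) +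
    (if 0 < α then (⊤ : ℝ≥0∞) else if α = 0 then 1 else 0) *
      ENNReal.ofReal (⨅ n : ℕ, probCgt G δ v₁ n)

/-- The critical exponent `α_c(δ)` attached to a family `𝒮₀` of edge sets. -/
def alphaC (G : SimpleGraph V) [DecidableRel G.Adj] (δ : ℝ)
    (S0 : Set (Finset (Sym2 V))) : EReal :=
  sInf { c : EReal | ∃ (ν : ProbMeas V) (F : Finset (Sym2 V)) (q : V → V → ℝ),
    F ∈ S0 ∧ q ∈ TE F ∧ (∀ x, ν.1 x ≠ 0 → memVerts F x) ∧ Invariant ν.1 q ∧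
    c = relEntInt ν.1 q (phat G δ F) }

/-- `α_c^1(δ)`: the critical exponent for the cover time. -/
def alphaC1 (G : SimpleGraph V) [DecidableRel G.Adj] (v₁ : V) (δ : ℝ) : EReal :=
  alphaC G δ (scrS G v₁ \ {G.edgeFinset})

end Graph

section Lifted

variable {V : Type} [Fintype V] [LinearOrder V]

/-- Smaller endpoint of an unordered pair. -/
def sym2lo (e : Sym2 V) : V := Sym2.lift ⟨fun a b => min a b, fun a b => min_comm a b⟩ e

/-- Larger endpoint of an unordered pair. -/
def sym2hi (e : Sym2 V) : V := Sym2.lift ⟨fun a b => max a b, fun a b => max_comm a b⟩ e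

/-- `V_S = E × {-1, 1}`: vertex set of the lifted directed graph `S`
(`true` plays the role of `+1`). -/
abbrev VSet (G : SimpleGraph V) [DecidableRel G.Adj] : Type :=
  {e : Sym2 V // e ∈ G.edgeFinset} × Bool

/-- Tail `z⁻` of an oriented edge. -/
def zm (G : SimpleGraph V) [DecidableRel G.Adj] (z : VSet G) : V :=
  if z.2 then sym2lo z.1.1 else sym2hi z.1.1

/-- Head `z⁺` of an oriented edge. -/
def zp (G : SimpleGraph V) [DecidableRel G.Adj] (z : VSet G) : V :=
  if z.2 then sym2hi z.1.1 else sym2lo z.1.1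

/-- The kernel `p_F` on the lifted directed graph `S`. -/
def pS (G : SimpleGraph V) [DecidableRel G.Adj] (δ : ℝ) (F : Finset (Sym2 V))
    (z₁ z₂ : VSet G) : ℝ :=
  if zp G z₁ = zm G z₂ then
    gw δ F z₂.1.1 / ∑ w : VSet G, (if zp G z₁ = zm G w then gw δ F w.1.1 else 0)
  else 0

/-- `𝒯_S`: stochastic matrices on `V_S` moving along orientations. -/
def TS (G : SimpleGraph V) [DecidableRel G.Adj] : Set (VSet G → VSet G → ℝ) :=
  {q | (∀ z w, 0 ≤ q z w) ∧ (∀ z, ∑ w, q z w = 1) ∧ ∀ z w, q z w ≠ 0 → zp G z = zm G w}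

/-- `𝒞(𝒮₀)`: probability measures on `V_S` whose first marginal is supported in
some member of `𝒮₀`. -/
def CC (G : SimpleGraph V) [DecidableRel G.Adj] (S0 : Set (Finset (Sym2 V))) :
    Set (ProbMeas (VSet G)) :=
  {μ | ∃ F ∈ S0, ∀ z : VSet G, μ.1 z ≠ 0 → z.1.1 ∈ F}

/-- `Λ_{δ,𝒮₀}`. -/
def Lam (G : SimpleGraph V) [DecidableRel G.Adj] (v₁ : V) (δ : ℝ)
    (S0 : Set (Finset (Sym2 V))) (μ : ProbMeas (VSet G)) : EReal :=
  sInf { c : EReal |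
    ∃ (μs : Fin G.edgeFinset.card → ProbMeas (VSet G)) (r : Fin G.edgeFinset.card → ℝ)
      (Es : Fin G.edgeFinset.card → Finset (Sym2 V))
      (qs : Fin G.edgeFinset.card → VSet G → VSet G → ℝ),
      Es ∈ seqE G v₁ ∧ (∀ k, 0 ≤ r k) ∧ (∀ k, Es k ∉ S0 → r k = 0) ∧ (∑ k, r k = 1) ∧
      (∀ k z, (μs k).1 z ≠ 0 → z.1.1 ∈ Es k) ∧
      (∀ z, ∑ k, r k * (μs k).1 z = μ.1 z) ∧
      (∀ k, qs k ∈ TS G) ∧ (∀ k, Invariant (μs k).1 (qs k)) ∧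
      c = ∑ k, ((r k : ℝ) : EReal) * relEntInt (μs k).1 (qs k) (pS G δ (Es k)) }

/-- `Λ^z_{δ,𝒮₀}`. -/
def LamZ (G : SimpleGraph V) [DecidableRel G.Adj] (v₁ : V) (δ : ℝ)
    (S0 : Set (Finset (Sym2 V))) (z : VSet G) (μ : ProbMeas (VSet G)) : EReal :=
  sInf { c : EReal |
    ∃ (μs : Fin G.edgeFinset.card → ProbMeas (VSet G)) (r : Fin G.edgeFinset.card → ℝ)
      (Es : Fin G.edgeFinset.card → Finset (Sym2 V))
      (qs : Fin G.edgeFinset.card → VSet G → VSet G → ℝ),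
      Es ∈ seqE G v₁ ∧ (∀ k : Fin G.edgeFinset.card, (k : ℕ) = 0 → Es k = {z.1.1}) ∧
      (∀ k, 0 ≤ r k) ∧ (∀ k, Es k ∉ S0 → r k = 0) ∧ (∑ k, r k = 1) ∧
      (∀ k w, (μs k).1 w ≠ 0 → w.1.1 ∈ Es k) ∧
      (∀ w, ∑ k, r k * (μs k).1 w = μ.1 w) ∧
      (∀ k, qs k ∈ TS G) ∧ (∀ k, Invariant (μs k).1 (qs k)) ∧
      c = ∑ k, ((r k : ℝ) : EReal) * relEntInt (μs k).1 (qs k) (pS G δ (Es k)) }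

/-- `Λ₁`: the Donsker–Varadhan functional for the simple random walk on `S`
(whose kernel is `pS` with `δ = 1`). -/
def Lam1 (G : SimpleGraph V) [DecidableRel G.Adj] (μ : ProbMeas (VSet G)) : EReal :=
  sInf { c : EReal | ∃ q ∈ TS G, Invariant μ.1 q ∧ c = relEntInt μ.1 q (pS G 1 ∅) }

/-- Boundary `∂F` of an edge set: edges of `F` adjacent to some edge outside `F`. -/
def bdry (G : SimpleGraph V) [DecidableRel G.Adj] (F : Finset (Sym2 V)) : Finset (Sym2 V) :=
  F.filter fun e => ∃ e' ∈ G.edgeFinset \ F, edgeAdj e e'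

/-- Out-degree `d(z)` of `z` in `S`. -/
def outDeg (G : SimpleGraph V) [DecidableRel G.Adj] (z : VSet G) : ℕ :=
  (Finset.univ.filter (fun w : VSet G => zp G z = zm G w)).card

/-- Number `k(z)` of out-neighbours of `z` lying in `F × {-1, 1}`. -/
def outDegIn (G : SimpleGraph V) [DecidableRel G.Adj] (F : Finset (Sym2 V))
    (z : VSet G) : ℕ :=
  (Finset.univ.filter (fun w : VSet G => zp G z = zm G w ∧ w.1.1 ∈ F)).card

/-- The law of `(Z_0, …, Z_n)` for the lifted `δ`-ORRW conditioned on `Z_0 = z`. -/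
def liftTraj (G : SimpleGraph V) [DecidableRel G.Adj] (δ : ℝ) (z : VSet G) (n : ℕ)
    (g : Fin (n + 1) → VSet G) : ℝ :=
  if g 0 = z then
    ∏ i : Fin n,
      pS G δ ((Finset.Iic i.castSucc).image (fun j => (g j).1.1))
        (g i.castSucc) (g i.succ)
  else 0

/-- The restricted logarithmic Laplace functional `W^{n+1}_{𝒮₀}(z)`. -/
def Wres (G : SimpleGraph V) [DecidableRel G.Adj] (δ : ℝ) (z : VSet G)
    (S0 : Set (Finset (Sym2 V))) (h : ProbMeas (VSet G) → ℝ) (n : ℕ) : EReal :=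
  if 0 < ∑ g : Fin (n + 1) → VSet G,
      (if empMeas n g ∈ CC G S0 then liftTraj G δ z n g else 0) then
    ((-((((n : ℝ) + 1))⁻¹ * Real.log (∑ g : Fin (n + 1) → VSet G,
      if empMeas n g ∈ CC G S0 then
        Real.exp (-((n : ℝ) + 1) * h (empMeas n g)) * liftTraj G δ z n g
      else 0)) : ℝ) : EReal)
  else (⊤ : EReal)

end Lifted

/-! ### Proof part 1 : abstract entropy -/
lemma term_lb (a b s : ℝ) (ha : 0 ≤ a) (hb : 0 ≤ b) (hab : b = 0 → a = 0) (hs : 0 < s) :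
    a * Real.log s + a - s * b ≤ a * Real.log (a / b) := by
  rcases ha.eq_or_lt with h | h
  · subst h; simp; positivity
  · have hb' : 0 < b := lt_of_le_of_ne hb (fun h' => h.ne' (hab h'.symm))
    have h1 := Real.log_le_sub_one_of_pos (show 0 < s * b / a by positivity)
    rw [Real.log_div (by positivity) h.ne', Real.log_mul hs.ne' hb'.ne'] at h1
    rw [Real.log_div h.ne' hb'.ne']
    have h2 := mul_le_mul_of_nonneg_left h1 h.le
    have h3 : a * (s * b / a - 1) = s * b - a := by field_simp
    nlinarith

lemma logsum (a b a' b' : ℝ) (ha : 0 ≤ a) (hb : 0 ≤ b) (hab : b = 0 → a = 0)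
    (ha' : 0 ≤ a') (hb' : 0 ≤ b') (hab' : b' = 0 → a' = 0) :
    (a + a') * Real.log ((a + a') / (b + b')) ≤
      a * Real.log (a / b) + a' * Real.log (a' / b') := by
  rcases (add_nonneg ha ha').eq_or_lt with h | h
  · have h1 : a = 0 := by linarith
    have h2 : a' = 0 := by linarith
    subst h1; subst h2; simp
  · have hbb : 0 < b + b' := by
      rcases (add_nonneg hb hb').eq_or_lt with h' | h'
      · have h1 := hab (by linarith)
        have h2 := hab' (by linarith)
        linarith
      · exact h'
    have hs : 0 < (a + a') / (b + b') := by positivity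
    have e1 := term_lb a b _ ha hb hab hs
    have e2 := term_lb a' b' _ ha' hb' hab' hs
    have e3 : (a + a') / (b + b') * (b + b') = a + a' := by field_simp
    nlinarith

lemma T_scale (s a b : ℝ) (hs : 0 < s) :
    (s * a) * Real.log ((s * a) / (s * b)) = s * (a * Real.log (a / b)) := by
  rw [mul_div_mul_left _ _ hs.ne']; ring

/-- real-valued entropy cost -/
def JJ {A : Type} [Fintype A] (P : A → A → ℝ) (μ : A → ℝ) (q : A → A → ℝ) : ℝ :=
  ∑ z, μ z * ∑ w, q z w * Real.log (q z w / P z w)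

lemma JJ_eq {A : Type} [Fintype A] (P : A → A → ℝ) (μ : A → ℝ) (q : A → A → ℝ) :
    JJ P μ q = ∑ x : A × A, (μ x.1 * q x.1 x.2) *
      Real.log ((μ x.1 * q x.1 x.2) / (μ x.1 * P x.1 x.2)) := by
  rw [JJ, Fintype.sum_prod_type]
  refine Finset.sum_congr rfl fun z _ => ?_
  rw [Finset.mul_sum]
  refine Finset.sum_congr rfl fun w _ => ?_
  by_cases h : μ z = 0
  · simp [h]
  · simp only []
    rw [mul_div_mul_left _ _ h]; ring

lemma strict_improve {A : Type} [Fintype A] (P : A → A → ℝ) (hP : ∀ z w, 0 ≤ P z w)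
    (μ μ' : A → ℝ) (q q' : A → A → ℝ) (hμ : ∀ z, 0 ≤ μ z) (hμ' : ∀ z, 0 ≤ μ' z)
    (hq0 : ∀ z w, 0 ≤ q z w) (hq0' : ∀ z w, 0 ≤ q' z w)
    (hq : ∀ z w, P z w = 0 → q z w = 0) (hq' : ∀ z w, P z w = 0 → q' z w = 0)
    (z0 w0 : A) (h1 : 0 < μ z0) (h2 : q z0 w0 = 0) (h3 : 0 < q' z0 w0) (h4 : 0 < μ' z0) :
    ∃ t : ℝ, 0 < t ∧ t < 1 ∧ ∀ (μt : A → ℝ) (qt : A → A → ℝ),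
      (∀ z, μt z = (1 - t) * μ z + t * μ' z) →
      (∀ z w, μt z * qt z w = (1 - t) * (μ z * q z w) + t * (μ' z * q' z w)) →
      JJ P μt qt < JJ P μ q := by
  have hP0 : 0 < P z0 w0 := lt_of_le_of_ne (hP _ _) (fun h => h3.ne' (hq' _ _ h.symm))
  obtain ⟨a', ha'⟩ : ∃ a', a' = μ' z0 * q' z0 w0 := ⟨_, rfl⟩
  obtain ⟨b, hb⟩ : ∃ b, b = μ z0 * P z0 w0 := ⟨_, rfl⟩
  obtain ⟨b', hb'⟩ : ∃ b', b' = μ' z0 * P z0 w0 := ⟨_, rfl⟩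
  have ha'p : 0 < a' := by rw [ha']; positivity
  have hbp : 0 < b := by rw [hb]; positivity
  have hbp' : 0 < b' := by rw [hb']; positivity
  obtain ⟨K, hK⟩ : ∃ K, K = JJ P μ' q' - JJ P μ q - a' * Real.log (a' / b') := ⟨_, rfl⟩
  obtain ⟨c, hc⟩ : ∃ c, c = Real.log (2 * a' / b) := ⟨_, rfl⟩
  obtain ⟨M, hM⟩ : ∃ M, M = c + (|K| + 1) / a' := ⟨_, rfl⟩
  obtain ⟨t, ht⟩ : ∃ t, t = min (1/2) (Real.exp (-M)) := ⟨_, rfl⟩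
  have ht0 : 0 < t := by rw [ht]; exact lt_min (by norm_num) (Real.exp_pos _)
  have ht2 : t ≤ 1/2 := by rw [ht]; exact min_le_left _ _
  have htM : Real.log t ≤ -M := by
    rw [Real.log_le_iff_le_exp ht0, ht]; exact min_le_right _ _
  refine ⟨t, ht0, by linarith, fun μt qt hμt hqt => ?_⟩
  have hs : 0 < 1 - t := by linarith
  rw [JJ_eq P μt qt]
  -- bound of each term
  have hterm : ∀ x : A × A, (μt x.1 * qt x.1 x.2) *
      Real.log ((μt x.1 * qt x.1 x.2) / (μt x.1 * P x.1 x.2)) ≤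
      (1 - t) * ((μ x.1 * q x.1 x.2) *
        Real.log ((μ x.1 * q x.1 x.2) / (μ x.1 * P x.1 x.2))) +
      t * ((μ' x.1 * q' x.1 x.2) *
        Real.log ((μ' x.1 * q' x.1 x.2) / (μ' x.1 * P x.1 x.2))) +
      (if x = (z0, w0) then t * (a' * (Real.log t + c) - a' * Real.log (a' / b')) else 0) := by
    rintro ⟨z, w⟩
    simp only []
    have hr : μt z * P z w = (1 - t) * (μ z * P z w) + t * (μ' z * P z w) := by
      rw [hμt]; ring
    rw [hqt, hr]
    split_ifs with hx
    · obtain ⟨rfl, rfl⟩ := Prod.mk.inj hx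
      rw [h2, ← ha', ← hb, ← hb']
      simp only [mul_zero, zero_add, zero_mul]
      have e1 : t * a' / ((1 - t) * b + t * b') ≤ t * (2 * a' / b) := by
        rw [div_le_iff₀ (by positivity)]
        have : t * (2 * a' / b) * ((1 - t) * b + t * b') =
          t * a' * (2 * (1 - t)) + t * (2 * a' / b) * (t * b') := by field_simp
        rw [this]
        have : 0 < t * (2 * a' / b) * (t * b') := by positivity
        have : 0 < t * a' := by positivity
        nlinarith
      have e2 := Real.log_le_log (by positivity) e1
      rw [Real.log_mul ht0.ne' (by positivity), ← hc] at e2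
      have := mul_le_mul_of_nonneg_left e2 (show 0 ≤ t * a' by positivity)
      nlinarith
    · rw [add_zero, ← T_scale _ _ _ hs, ← T_scale _ _ _ ht0]
      have := hμ z; have := hμ' z; have := hP z w; have := hq0 z w; have := hq0' z w
      apply logsum <;> try positivity
      · intro h
        rcases mul_eq_zero.1 h with h | h
        · exact absurd h hs.ne'
        · rcases mul_eq_zero.1 h with h | h
          · simp [h]
          · simp [hq _ _ h]
      · intro h
        rcases mul_eq_zero.1 h with h | h
        · exact absurd h ht0.ne'
        · rcases mul_eq_zero.1 h with h | h
          · simp [h]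
          · simp [hq' _ _ h]
  refine lt_of_le_of_lt (Finset.sum_le_sum fun x _ => hterm x) ?_
  rw [Finset.sum_add_distrib, Finset.sum_add_distrib, ← Finset.mul_sum, ← Finset.mul_sum,
    ← JJ_eq, ← JJ_eq, Finset.sum_ite_eq' Finset.univ (z0, w0), if_pos (Finset.mem_univ _)]
  have e3 : a' * (Real.log t + c) ≤ -(|K| + 1) := by
    have : Real.log t + c ≤ -((|K| + 1) / a') := by linarith
    have := mul_le_mul_of_nonneg_left this ha'p.le
    have e : a' * -((|K| + 1) / a') = -(|K| + 1) := by field_simp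
    linarith
  have e4 : K + a' * (Real.log t + c) < 0 := by
    have := le_abs_self K
    linarith
  have := mul_neg_of_pos_of_neg ht0 e4
  rw [hK] at this
  nlinarith

/-! ### Proof part 2 : graph lemmas -/
section Aux
set_option linter.unusedSectionVars false
variable {V : Type} [Fintype V] [LinearOrder V]

lemma zmzp (G : SimpleGraph V) [DecidableRel G.Adj] (z : VSet G) :
    s(zm G z, zp G z) = z.1.1 := by
  obtain ⟨⟨e, he⟩, σ⟩ := z
  induction e with | _ x y =>
  cases σ <;> simp [zm, zp, sym2lo, sym2hi, Sym2.lift_mk, -Sym2.eq] <;>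
    rcases le_total x y with h | h <;> simp [h]

lemma zm_mem (G : SimpleGraph V) [DecidableRel G.Adj] (z : VSet G) : zm G z ∈ z.1.1 := by
  rw [← zmzp]; simp

lemma zp_mem (G : SimpleGraph V) [DecidableRel G.Adj] (z : VSet G) : zp G z ∈ z.1.1 := by
  rw [← zmzp]; simp

/-- reversal -/
def rv (G : SimpleGraph V) [DecidableRel G.Adj] (z : VSet G) : VSet G := (z.1, !z.2)

lemma zm_rv (G : SimpleGraph V) [DecidableRel G.Adj] (z : VSet G) : zm G (rv G z) = zp G z := by
  obtain ⟨e, σ⟩ := z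
  cases σ <;> simp [zm, zp, rv]

lemma zp_rv (G : SimpleGraph V) [DecidableRel G.Adj] (z : VSet G) : zp G (rv G z) = zm G z := by
  obtain ⟨e, σ⟩ := z
  cases σ <;> simp [zm, zp, rv]

lemma rv_rv (G : SimpleGraph V) [DecidableRel G.Adj] (z : VSet G) : rv G (rv G z) = z := by
  obtain ⟨e, σ⟩ := z
  simp [rv]

lemma exists_lift (G : SimpleGraph V) [DecidableRel G.Adj] (x y : V)
    (h : s(x, y) ∈ G.edgeFinset) :
    ∃ z : VSet G, z.1.1 = s(x, y) ∧ zm G z = x ∧ zp G z = y := by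
  have h0 := zmzp G (⟨s(x, y), h⟩, true)
  rcases Sym2.eq_iff.1 h0 with ⟨h1, h2⟩ | ⟨h1, h2⟩
  · exact ⟨_, rfl, h1, h2⟩
  · exact ⟨rv G (⟨s(x, y), h⟩, true), rfl, by rw [zm_rv, h2], by rw [zp_rv, h1]⟩

lemma grow (G : SimpleGraph V) [DecidableRel G.Adj] (v₁ : V) (F A : Finset (Sym2 V))
    (hF : F ∈ scrS G v₁) (hA : A ⊆ F) (hne : A ≠ F) (hv : ∃ e ∈ A, v₁ ∈ e) :
    ∃ e ∈ F, e ∉ A ∧ ∃ e' ∈ A, edgeAdj e e' := by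
  by_contra! hcon
  obtain ⟨e, heF, heA⟩ := Finset.exists_of_ssubset (hA.ssubset_of_ne hne)
  obtain ⟨x, hx⟩ : ∃ x, x ∈ e := by
    induction e with | _ x y => exact ⟨x, by simp⟩
  obtain ⟨e1, he1, hv1⟩ := hv
  have hr := hF.2.2 v₁ x ⟨e1, hA he1, hv1⟩ ⟨e, heF, hx⟩
  rw [SimpleGraph.reachable_iff_reflTransGen] at hr
  have : memVerts A x := by
    clear hx
    induction hr with
    | refl => exact ⟨e1, he1, hv1⟩
    | @tail y y' _ hyy ih =>
      obtain ⟨e', he', hy⟩ := ih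
      have hyF : s(y, y') ∈ F := by
        have := (SimpleGraph.fromEdgeSet_adj _).1 hyy
        exact_mod_cast this.1
      by_cases hyA : s(y, y') ∈ A
      · exact ⟨_, hyA, by simp⟩
      · exact absurd ⟨y, by simp, hy⟩ (hcon _ hyF hyA e' he')
  obtain ⟨e', he', hx'⟩ := this
  exact hcon e heF heA e' he' ⟨x, hx, hx'⟩

lemma edge_mem_scrS (G : SimpleGraph V) [DecidableRel G.Adj] (hG : G.Connected) (v₁ : V)
    (F : Finset (Sym2 V)) (hF : F ∈ scrS G v₁) : G.edgeFinset ∈ scrS G v₁ := by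
  refine ⟨subset_rfl, ?_, fun x y _ _ => ?_⟩
  · obtain ⟨e, he, hv⟩ := hF.2.1
    exact ⟨e, hF.1 he, hv⟩
  · rw [SimpleGraph.coe_edgeFinset, SimpleGraph.fromEdgeSet_edgeSet]
    exact hG.preconnected x y

lemma exists_seq (G : SimpleGraph V) [DecidableRel G.Adj] (hG : G.Connected) (v₁ : V)
    (F : Finset (Sym2 V)) (hF : F ∈ scrS G v₁) :
    ∃ Es ∈ seqE G v₁, ∃ k, Es k = F := by
  have hE := edge_mem_scrS G hG v₁ F hF
  obtain ⟨e1, he1, hv1⟩ := hF.2.1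
  have step : ∀ A : Finset (Sym2 V), ∃ B : Finset (Sym2 V),
      (A ⊆ G.edgeFinset ∧ A ≠ G.edgeFinset ∧ e1 ∈ A ∧ (A ⊆ F ∨ F ⊆ A)) →
      (B ⊆ G.edgeFinset ∧ e1 ∈ B ∧ (B ⊆ F ∨ F ⊆ B) ∧ A ⊂ B ∧ B.card = A.card + 1 ∧
        ∀ e ∈ B \ A, ∃ e' ∈ A, edgeAdj e e') := by
    intro A
    by_cases hA : (A ⊆ G.edgeFinset ∧ A ≠ G.edgeFinset ∧ e1 ∈ A ∧ (A ⊆ F ∨ F ⊆ A))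
    swap
    · exact ⟨∅, fun h => absurd h hA⟩
    obtain ⟨hA1, hA2, hA3, hA4⟩ := hA
    have key : ∃ e ∈ G.edgeFinset, e ∉ A ∧ (∃ e' ∈ A, edgeAdj e e') ∧
        (insert e A ⊆ F ∨ F ⊆ insert e A) := by
      by_cases hFA : F ⊆ A
      · obtain ⟨e, h1, h2, h3⟩ := grow G v₁ _ A hE hA1 hA2 ⟨e1, hA3, hv1⟩
        exact ⟨e, h1, h2, h3, Or.inr (hFA.trans (Finset.subset_insert _ _))⟩
      · have hAF : A ⊆ F := hA4.resolve_right hFA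
        obtain ⟨e, h1, h2, h3⟩ := grow G v₁ _ A hF hAF (fun h => hFA h.ge) ⟨e1, hA3, hv1⟩
        exact ⟨e, hF.1 h1, h2, h3, Or.inl (Finset.insert_subset h1 hAF)⟩
    obtain ⟨e, h1, h2, h3, h4⟩ := key
    refine ⟨insert e A, fun _ => ⟨Finset.insert_subset h1 hA1, Finset.mem_insert_of_mem hA3, h4,
      Finset.ssubset_insert h2, Finset.card_insert_of_notMem h2, ?_⟩⟩
    intro e' he'
    rw [Finset.mem_sdiff, Finset.mem_insert] at he'
    rcases he'.1 with rfl | h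
    · exact h3
    · exact absurd h he'.2
  choose f hf using step
  have inv : ∀ n, n < G.edgeFinset.card → ((f^[n] {e1}) ⊆ G.edgeFinset ∧ e1 ∈ (f^[n] {e1}) ∧
      ((f^[n] {e1}) ⊆ F ∨ F ⊆ (f^[n] {e1})) ∧ (f^[n] {e1}).card = n + 1) := by
    intro n
    induction n with
    | zero =>
      intro _
      simp only [Function.iterate_zero, id]
      exact ⟨Finset.singleton_subset_iff.2 (hF.1 he1), Finset.mem_singleton_self _,
        Or.inl (Finset.singleton_subset_iff.2 he1), by simp⟩
    | succ n ih =>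
      intro hn
      obtain ⟨i1, i2, i3, i4⟩ := ih (by omega)
      rw [Function.iterate_succ_apply']
      have := hf _ ⟨i1, fun h => by rw [h] at i4; omega, i2, i3⟩
      exact ⟨this.1, this.2.1, this.2.2.1, by rw [this.2.2.2.2.1, i4]⟩
  have nxt : ∀ n, n + 1 < G.edgeFinset.card → (f^[n] {e1} ⊂ f^[n+1] {e1} ∧
      ∀ e ∈ f^[n+1] {e1} \ f^[n] {e1}, ∃ e' ∈ f^[n] {e1}, edgeAdj e e') := by
    intro n hn
    obtain ⟨i1, i2, i3, i4⟩ := inv n (by omega)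
    rw [Function.iterate_succ_apply']
    have := hf _ ⟨i1, fun h => by rw [h] at i4; omega, i2, i3⟩
    exact ⟨this.2.2.2.1, this.2.2.2.2.2⟩
  have hFpos : 0 < F.card := Finset.card_pos.2 ⟨e1, he1⟩
  have hFle := Finset.card_le_card hF.1
  refine ⟨fun k => f^[k] {e1}, ⟨fun k => (inv k k.2).1, fun k => (inv k k.2).2.2.2, ?_, ?_, ?_⟩,
    ⟨F.card - 1, by omega⟩, ?_⟩
  · intro k l hkl
    have := (nxt k (by omega)).1
    rw [hkl] at this
    exact this
  · intro k _
    exact ⟨e1, (inv k k.2).2.1, hv1⟩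
  · intro k l hkl
    have := (nxt k (by omega)).2
    rw [hkl] at this
    exact this
  · obtain ⟨_, _, i3, i4⟩ := inv (F.card - 1) (by omega)
    have i5 : (f^[F.card - 1] {e1}).card = F.card := by omega
    rcases i3 with h | h
    · exact Finset.eq_of_subset_of_card_le h i5.ge
    · exact (Finset.eq_of_subset_of_card_le h i5.le).symm

lemma gw_pos (δ : ℝ) (hδ : 0 < δ) (F : Finset (Sym2 V)) (e : Sym2 V) : 0 < gw δ F e := by
  unfold gw; split_ifs <;> linarith

lemma sum_gw_pos (G : SimpleGraph V) [DecidableRel G.Adj] (δ : ℝ) (hδ : 0 < δ)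
    (F : Finset (Sym2 V)) (z : VSet G) :
    0 < ∑ w : VSet G, (if zp G z = zm G w then gw δ F w.1.1 else 0) := by
  refine Finset.sum_pos' (fun w _ => ?_) ⟨rv G z, Finset.mem_univ _, ?_⟩
  · split_ifs
    · exact (gw_pos δ hδ F _).le
    · exact le_rfl
  · rw [if_pos (zm_rv G z).symm]
    exact gw_pos δ hδ F _

lemma pS_nonneg (G : SimpleGraph V) [DecidableRel G.Adj] (δ : ℝ) (hδ : 0 < δ)
    (F : Finset (Sym2 V)) (z w : VSet G) : 0 ≤ pS G δ F z w := by
  unfold pS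
  split_ifs
  · exact (div_pos (gw_pos δ hδ F _) (sum_gw_pos G δ hδ F z)).le
  · exact le_rfl

lemma TS_ac (G : SimpleGraph V) [DecidableRel G.Adj] (δ : ℝ) (hδ : 0 < δ)
    (F : Finset (Sym2 V)) (q : VSet G → VSet G → ℝ) (hq : q ∈ TS G) (z w : VSet G)
    (h : pS G δ F z w = 0) : q z w = 0 := by
  by_contra hc
  have := hq.2.2 z w hc
  rw [pS, if_pos this] at h
  exact (div_pos (gw_pos δ hδ F _) (sum_gw_pos G δ hδ F z)).ne' h

lemma coe_fsum {ι : Type} (s : Finset ι) (f : ι → ℝ) :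
    ((∑ i ∈ s, f i : ℝ) : EReal) = ∑ i ∈ s, ((f i : ℝ) : EReal) := by
  induction s using Finset.induction_on with
  | empty => simp
  | insert a s ha ih => rw [Finset.sum_insert ha, Finset.sum_insert ha, EReal.coe_add, ih]

lemma relEntInt_eq (G : SimpleGraph V) [DecidableRel G.Adj] (δ : ℝ) (hδ : 0 < δ)
    (F : Finset (Sym2 V)) (μ : VSet G → ℝ) (q : VSet G → VSet G → ℝ) (hq : q ∈ TS G) :
    relEntInt μ q (pS G δ F) = ((JJ (pS G δ F) μ q : ℝ) : EReal) := by
  unfold relEntInt JJ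
  rw [coe_fsum]
  refine Finset.sum_congr rfl fun z _ => ?_
  rw [relEnt, if_pos (TS_ac G δ hδ F q hq z), EReal.coe_mul]

lemma sum_gw_eq (G : SimpleGraph V) [DecidableRel G.Adj] (δ : ℝ)
    (F : Finset (Sym2 V)) (z : VSet G) :
    ∑ w : VSet G, (if zp G z = zm G w then gw δ F w.1.1 else 0) =
      (outDeg G z : ℝ) - (outDegIn G F z : ℝ) + (outDegIn G F z : ℝ) * δ := by
  rw [outDeg, outDegIn, Finset.card_filter, Finset.card_filter]
  push_cast
  rw [← Finset.sum_sub_distrib, Finset.sum_mul, ← Finset.sum_add_distrib]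
  refine Finset.sum_congr rfl fun w _ => ?_
  unfold gw
  by_cases h1 : zp G z = zm G w <;> by_cases h2 : w.1.1 ∈ F <;> simp [h1, h2]

/-- the boundary term -/
def BB (G : SimpleGraph V) [DecidableRel G.Adj] (δ : ℝ) (F : Finset (Sym2 V))
    (μ : VSet G → ℝ) : ℝ :=
  ∑ z : VSet G,
            if z.1.1 ∈ bdry G F then
              μ z * Real.log
                (((outDeg G z : ℝ) - (outDegIn G F z : ℝ) + (outDegIn G F z : ℝ) * δ) /
                  ((outDeg G z : ℝ) * δ))
            else 0

lemma outDeg_pos (G : SimpleGraph V) [DecidableRel G.Adj] (z : VSet G) :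
    (0 : ℝ) < outDeg G z := by
  have : 0 < outDeg G z := Finset.card_pos.2 ⟨rv G z, by simp [zm_rv]⟩
  exact_mod_cast this

lemma inv_supp {A : Type} [Fintype A] (μ : A → ℝ) (q : A → A → ℝ) (hμ : ∀ z, 0 ≤ μ z)
    (hq : ∀ z w, 0 ≤ q z w) (hi : Invariant μ q) (z w : A) (hz : μ z ≠ 0) (hw : μ w = 0) :
    q z w = 0 := by
  have h := hi w
  rw [hw, Finset.sum_eq_zero_iff_of_nonneg (fun x _ => mul_nonneg (hμ x) (hq x w))] at h
  exact (mul_eq_zero.1 (h z (Finset.mem_univ _))).resolve_left hz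

lemma cost_eq (G : SimpleGraph V) [DecidableRel G.Adj] (δ : ℝ) (hδ : 0 < δ)
    (F : Finset (Sym2 V)) (μ : ProbMeas (VSet G)) (q : VSet G → VSet G → ℝ) (hq : q ∈ TS G)
    (hs : ∀ z : VSet G, μ.1 z ≠ 0 → z.1.1 ∈ F) (hi : Invariant μ.1 q) :
    JJ (pS G δ F) μ.1 q = JJ (pS G 1 ∅) μ.1 q + BB G δ F μ.1 := by
  unfold JJ BB
  rw [← Finset.sum_add_distrib]
  refine Finset.sum_congr rfl fun z _ => ?_
  by_cases hz : μ.1 z = 0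
  · simp [hz]
  have hD := sum_gw_pos G δ hδ F z
  have hd := outDeg_pos G z
  have hrow : ∑ w, q z w * Real.log (q z w / pS G δ F z w) =
      ∑ w, q z w * Real.log (q z w / pS G 1 ∅ z w) + Real.log
                (((outDeg G z : ℝ) - (outDegIn G F z : ℝ) + (outDegIn G F z : ℝ) * δ) /
                  ((outDeg G z : ℝ) * δ)) := by
    have e0 : ∀ L : ℝ, L = ∑ w, q z w * L := fun L => by
      rw [← Finset.sum_mul, hq.2.1 z, one_mul]
    conv_rhs => rw [e0 (Real.log (_ / (_ * δ))), ← Finset.sum_add_distrib]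
    refine Finset.sum_congr rfl fun w _ => ?_
    by_cases hw : q z w = 0
    · simp [hw]
    have hzw := hq.2.2 z w hw
    have hwF : w.1.1 ∈ F := by
      apply hs
      intro h
      exact hw (inv_supp μ.1 q μ.2.1 hq.1 hi z w hz h)
    have e1 : pS G 1 ∅ z w = 1 / outDeg G z := by
      rw [pS, if_pos hzw, sum_gw_eq]; simp [gw]
    have e2 : pS G δ F z w = δ / ((outDeg G z : ℝ) - (outDegIn G F z : ℝ) + (outDegIn G F z : ℝ) * δ) := by
      rw [pS, if_pos hzw, sum_gw_eq]; simp [gw, hwF]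
    rw [sum_gw_eq] at hD
    rw [← mul_add, e1, e2]
    congr 1
    rw [← Real.log_mul (by simp [hw, hd.ne']) (by positivity)]
    congr 1
    field_simp
  rw [hrow]
  split_ifs with hb
  · ring
  · have hk : outDegIn G F z = outDeg G z := by
      unfold outDegIn outDeg
      congr 1
      ext w
      simp only [Finset.mem_filter, Finset.mem_univ, true_and, and_iff_left_iff_imp]
      intro hzw
      by_contra hwF
      apply hb
      rw [bdry, Finset.mem_filter]
      exact ⟨hs z hz, w.1.1, Finset.mem_sdiff.2 ⟨w.1.2, hwF⟩, zp G z, zp_mem G z, hzw ▸ zm_mem G w⟩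
    rw [hk, sub_self, zero_add, div_self (by positivity)]
    simp


/-! ### Proof part 3 : existence -/
lemma unif (G : SimpleGraph V) [DecidableRel G.Adj] (F : Finset (Sym2 V))
    (hF : F ⊆ G.edgeFinset) (hne : F.Nonempty) :
    ∃ (μ : ProbMeas (VSet G)) (q : VSet G → VSet G → ℝ), q ∈ TS G ∧ Invariant μ.1 q ∧
      (∀ z : VSet G, z.1.1 ∈ F → 0 < μ.1 z) ∧ (∀ z : VSet G, z.1.1 ∉ F → μ.1 z = 0) ∧
      (∀ z w : VSet G, z.1.1 ∈ F → w.1.1 ∈ F → zp G z = zm G w → 0 < q z w) := by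
  obtain ⟨N, hN⟩ : ∃ N : ℝ, N = ∑ z : VSet G, (if z.1.1 ∈ F then 1 else 0) := ⟨_, rfl⟩
  have hNpos : 0 < N := by
    obtain ⟨e, he⟩ := hne
    rw [hN]
    refine Finset.sum_pos' (fun w _ => by split_ifs <;> simp) ⟨(⟨e, hF he⟩, true), Finset.mem_univ _, ?_⟩
    simp [he]
  have hkpos : ∀ z : VSet G, z.1.1 ∈ F → (0 : ℝ) < outDegIn G F z := by
    intro z hz
    have : 0 < outDegIn G F z :=
      Finset.card_pos.2 ⟨rv G z, by simp only [Finset.mem_filter, Finset.mem_univ, true_and, zm_rv]; exact hz⟩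
    exact_mod_cast this
  refine ⟨⟨fun z => if z.1.1 ∈ F then 1 / N else 0, fun z => ?_, ?_⟩,
    fun z w => if z.1.1 ∈ F then (if zp G z = zm G w ∧ w.1.1 ∈ F then 1 / (outDegIn G F z : ℝ) else 0)
      else if w = rv G z then 1 else 0, ⟨?_, ?_, ?_⟩, ?_, ?_, ?_, ?_⟩
  · simp only []
    split_ifs <;> positivity
  · have : ∀ z : VSet G, (if z.1.1 ∈ F then 1 / N else 0) = (if z.1.1 ∈ F then 1 else 0) / N := by
      intro z; split_ifs <;> simp
    rw [Finset.sum_congr rfl fun z _ => this z, ← Finset.sum_div, ← hN, div_self hNpos.ne']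
  · intro z w
    simp only []
    split_ifs <;> positivity
  · intro z
    simp only []
    split_ifs with hz
    · rw [← Finset.sum_filter, Finset.sum_const, nsmul_eq_mul]
      exact mul_one_div_cancel (hkpos z hz).ne'
    · simp
  · intro z w
    simp only []
    split_ifs with h1 h2 h3
    · exact fun _ => h2.1
    · simp
    · intro _; rw [h3, zm_rv]
    · simp
  · intro y
    simp only []
    by_cases hy : y.1.1 ∈ F
    · have hk : ∀ x : VSet G, zp G x = zm G y → outDegIn G F x = outDegIn G F (rv G y) := by
        intro x hx
        unfold outDegIn
        rw [zp_rv, hx]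
      have : ∀ x : VSet G, (if x.1.1 ∈ F then 1 / N else 0) *
          (if x.1.1 ∈ F then (if zp G x = zm G y ∧ y.1.1 ∈ F then 1 / (outDegIn G F x : ℝ) else 0)
            else if y = rv G x then 1 else 0) =
          if zp G x = zm G y ∧ x.1.1 ∈ F then 1 / N * (1 / (outDegIn G F (rv G y) : ℝ)) else 0 := by
        intro x
        by_cases h1 : x.1.1 ∈ F <;> by_cases h2 : zp G x = zm G y
        · rw [hk x h2]; simp [h1, h2, hy]
        · simp [h1, h2]
        · simp [h1]
        · simp [h1]
      rw [Finset.sum_congr rfl fun x _ => this x, ← Finset.sum_filter, Finset.sum_const, nsmul_eq_mul,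
        if_pos hy]
      have hc : (Finset.univ.filter (fun x : VSet G => zp G x = zm G y ∧ x.1.1 ∈ F)).card =
          outDegIn G F (rv G y) := by
        unfold outDegIn
        refine Finset.card_bij (fun x _ => rv G x) ?_ ?_ ?_
        · intro x hx
          simp only [Finset.mem_filter, Finset.mem_univ, true_and] at hx ⊢
          rw [zp_rv, zm_rv]
          exact ⟨hx.1.symm, hx.2⟩
        · intro a _ b _ hab
          rw [← rv_rv G a, hab, rv_rv]
        · intro b hb
          simp only [Finset.mem_filter, Finset.mem_univ, true_and] at hb
          refine ⟨rv G b, ?_, rv_rv G b⟩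
          simp only [Finset.mem_filter, Finset.mem_univ, true_and]
          rw [zp_rv, ← zp_rv G y]
          exact ⟨hb.1.symm, hb.2⟩
      rw [hc]
      have := hkpos (rv G y) hy
      field_simp
    · rw [if_neg hy]
      refine Finset.sum_eq_zero fun x _ => ?_
      by_cases h1 : x.1.1 ∈ F <;> simp [h1, hy]
  · intro z hz
    simp only [hz, if_true]
    positivity
  · intro z hz
    simp [hz]
  · intro z w hz hw hzw
    have := hkpos z hz
    simp only [hz, hw, hzw, if_true, and_self]
    positivity

/-- feasible triples -/
def Feas (G : SimpleGraph V) [DecidableRel G.Adj] (F : Finset (Sym2 V)) (μ : VSet G → ℝ)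
    (q : VSet G → VSet G → ℝ) : Prop :=
  ((∀ z, 0 ≤ μ z) ∧ ∑ z, μ z = 1) ∧ q ∈ TS G ∧ Invariant μ q ∧
    ∀ z : VSet G, z.1.1 ∉ F → μ z = 0

lemma JJ_cont {A : Type} [Fintype A] (P : A → A → ℝ) :
    Continuous (fun x : (A → ℝ) × (A → A → ℝ) => JJ P x.1 x.2) := by
  have hφ : ∀ p : ℝ, Continuous (fun y : ℝ => y * Real.log (y / p)) := by
    intro p
    by_cases hp : p = 0
    · subst hp; simpa using continuous_const
    · have : (fun y : ℝ => y * Real.log (y / p)) = fun y => p * ((y / p) * Real.log (y / p)) := by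
        funext y; field_simp
      rw [this]
      exact continuous_const.mul (Real.continuous_mul_log.comp (continuous_id.div_const p))
  unfold JJ
  refine continuous_finsetSum _ fun z _ => ?_
  refine Continuous.mul (by fun_prop) (continuous_finsetSum _ fun w _ => ?_)
  exact (hφ (P z w)).comp (by fun_prop)

lemma Feas_compact (G : SimpleGraph V) [DecidableRel G.Adj] (F : Finset (Sym2 V)) :
    IsCompact {x : (VSet G → ℝ) × (VSet G → VSet G → ℝ) | Feas G F x.1 x.2} := by
  have hK : IsCompact ((Set.univ.pi fun _ : VSet G => Set.Icc (0:ℝ) 1) ×ˢ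
      (Set.univ.pi fun _ : VSet G => Set.univ.pi fun _ : VSet G => Set.Icc (0:ℝ) 1)) :=
    (isCompact_univ_pi fun _ => isCompact_Icc).prod
      (isCompact_univ_pi fun _ => isCompact_univ_pi fun _ => isCompact_Icc)
  refine hK.of_isClosed_subset ?_ ?_
  · have hsp : ∀ z w : VSet G, IsClosed {x : (VSet G → ℝ) × (VSet G → VSet G → ℝ) |
        x.2 z w ≠ 0 → zp G z = zm G w} := by
      intro z w
      by_cases h : zp G z = zm G w
      · simp [h]
      · simp only [h, imp_false, not_not]
        exact isClosed_eq (by fun_prop) (by fun_prop)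
    have hsF : ∀ z : VSet G, IsClosed {x : (VSet G → ℝ) × (VSet G → VSet G → ℝ) |
        z.1.1 ∉ F → x.1 z = 0} := by
      intro z
      by_cases h : z.1.1 ∈ F
      · simp [h]
      · simp only [h, not_false_eq_true, true_imp_iff]
        exact isClosed_eq (by fun_prop) (by fun_prop)
    have hiff : ∀ x : (VSet G → ℝ) × (VSet G → VSet G → ℝ), Feas G F x.1 x.2 ↔
        ((∀ z, 0 ≤ x.1 z) ∧ ∑ z, x.1 z = 1) ∧ ((∀ z w, 0 ≤ x.2 z w) ∧ (∀ z, ∑ w, x.2 z w = 1) ∧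
          ∀ z w, x.2 z w ≠ 0 → zp G z = zm G w) ∧ (∀ y, ∑ z, x.1 z * x.2 z y = x.1 y) ∧
          ∀ z : VSet G, z.1.1 ∉ F → x.1 z = 0 := fun x => Iff.rfl
    simp only [hiff, Set.ofPred_and, Set.ofPred_forall]
    refine IsClosed.inter (IsClosed.inter ?_ ?_) (IsClosed.inter (IsClosed.inter ?_ (IsClosed.inter ?_ ?_)) (IsClosed.inter ?_ ?_))
    · exact isClosed_iInter fun z => isClosed_le (by fun_prop) (by fun_prop)
    · exact isClosed_eq (by fun_prop) (by fun_prop)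
    · exact isClosed_iInter fun z => isClosed_iInter fun w => isClosed_le (by fun_prop) (by fun_prop)
    · exact isClosed_iInter fun z => isClosed_eq (by fun_prop) (by fun_prop)
    · exact isClosed_iInter fun z => isClosed_iInter fun w => hsp z w
    · exact isClosed_iInter fun z => isClosed_eq (by fun_prop) (by fun_prop)
    · exact isClosed_iInter fun z => by simpa only [Set.ofPred_forall] using hsF z
  · rintro ⟨μ, q⟩ ⟨⟨h1, h2⟩, ⟨h3, h4, _⟩, _⟩
    refine ⟨fun z _ => ⟨h1 z, ?_⟩, fun z _ w _ => ⟨h3 z w, ?_⟩⟩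
    · exact h2 ▸ Finset.single_le_sum (fun i _ => h1 i) (Finset.mem_univ z)
    · exact h4 z ▸ Finset.single_le_sum (fun i _ => h3 z i) (Finset.mem_univ w)

lemma exists_min (G : SimpleGraph V) [DecidableRel G.Adj] (v₁ : V) (δ : ℝ)
    (S0 : Set (Finset (Sym2 V))) (hS0ne : S0.Nonempty) (hS0sub : S0 ⊆ scrS G v₁) :
    ∃ (F0 : Finset (Sym2 V)) (μ0 : VSet G → ℝ) (q0 : VSet G → VSet G → ℝ),
      F0 ∈ S0 ∧ Feas G F0 μ0 q0 ∧ ∀ F ∈ S0, ∀ μ q, Feas G F μ q →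
        JJ (pS G δ F0) μ0 q0 ≤ JJ (pS G δ F) μ q := by
  have h1 : ∀ F : Finset (Sym2 V), ∃ x : (VSet G → ℝ) × (VSet G → VSet G → ℝ), F ∈ S0 →
      (Feas G F x.1 x.2 ∧ ∀ μ q, Feas G F μ q → JJ (pS G δ F) x.1 x.2 ≤ JJ (pS G δ F) μ q) := by
    intro F
    by_cases hF : F ∈ S0
    swap
    · exact ⟨(0, 0), fun h => absurd h hF⟩
    obtain ⟨e, he, _⟩ := (hS0sub hF).2.1
    obtain ⟨μ, q, hq, hi, _, h0, _⟩ := unif G F (hS0sub hF).1 ⟨e, he⟩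
    obtain ⟨x, hx, hmin⟩ := (Feas_compact G F).exists_isMinOn ⟨(μ.1, q), ⟨μ.2, hq, hi, h0⟩⟩
      (JJ_cont (pS G δ F)).continuousOn
    exact ⟨x, fun _ => ⟨hx, fun μ q h => hmin (show (μ, q) ∈ {x | _} from h)⟩⟩
  choose x hx using h1
  obtain ⟨F0, hF0, hmin⟩ := Set.exists_min_image S0 (fun F => JJ (pS G δ F) (x F).1 (x F).2)
    (Set.toFinite S0) hS0ne
  exact ⟨F0, _, _, hF0, (hx F0 hF0).1, fun F hF μ q h => (hmin F hF).trans ((hx F hF).2 μ q h)⟩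

lemma full_supp (G : SimpleGraph V) [DecidableRel G.Adj] (v₁ : V) (δ : ℝ) (hδ : 0 < δ)
    (F : Finset (Sym2 V)) (hF : F ∈ scrS G v₁) (μ : VSet G → ℝ) (q : VSet G → VSet G → ℝ)
    (hf : Feas G F μ q) (hmin : ∀ μ' q', Feas G F μ' q' →
        JJ (pS G δ F) μ q ≤ JJ (pS G δ F) μ' q') (z : VSet G) (hz : z.1.1 ∈ F) : 0 < μ z := by
  obtain ⟨⟨hμ0, hμ1⟩, hq, hi, hs⟩ := hf
  -- closedness of the support
  have hcl : ∀ a b : VSet G, 0 < μ a → b.1.1 ∈ F → zp G a = zm G b → 0 < μ b := by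
    intro a b ha hb hab
    by_contra hnb
    have hb0 : μ b = 0 := le_antisymm (not_lt.1 hnb) (hμ0 b)
    have haF : a.1.1 ∈ F := by
      by_contra h
      exact ha.ne' (hs a h)
    obtain ⟨e, he, _⟩ := hF.2.1
    obtain ⟨μ', q', hq', hi', hp', h0', hpos'⟩ := unif G F hF.1 ⟨e, he⟩
    obtain ⟨t, ht0, ht1, ht⟩ := strict_improve (pS G δ F) (pS_nonneg G δ hδ F) μ μ'.1 q q' hμ0 μ'.2.1
      hq.1 hq'.1 (TS_ac G δ hδ F q hq) (TS_ac G δ hδ F q' hq') a b ha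
      (inv_supp μ q hμ0 hq.1 hi a b ha.ne' hb0) (hpos' a b haF hb hab) (hp' a haF)
    have hs0 : 0 < 1 - t := by linarith
    obtain ⟨μt, hμt⟩ : ∃ μt : VSet G → ℝ, μt = fun z => (1 - t) * μ z + t * μ'.1 z := ⟨_, rfl⟩
    obtain ⟨qt, hqt⟩ : ∃ qt : VSet G → VSet G → ℝ, qt = fun z w => if z.1.1 ∈ F then
      ((1 - t) * (μ z * q z w) + t * (μ'.1 z * q' z w)) / μt z else q' z w := ⟨_, rfl⟩
    have hμtp : ∀ z : VSet G, z.1.1 ∈ F → 0 < μt z := by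
      intro z hz
      have := hp' z hz; have := hμ0 z
      rw [hμt]; positivity
    have hμt0 : ∀ z : VSet G, z.1.1 ∉ F → μt z = 0 := by
      intro z hz
      rw [hμt]; simp [hs z hz, h0' z hz]
    have hprod : ∀ z w, μt z * qt z w = (1 - t) * (μ z * q z w) + t * (μ'.1 z * q' z w) := by
      intro z w
      by_cases hz : z.1.1 ∈ F
      · rw [hqt]
        simp only [hz, if_true]
        exact mul_div_cancel₀ _ (hμtp z hz).ne'
      · rw [hμt0 z hz, hs z hz, h0' z hz]; simp
    refine absurd (ht μt qt (fun z => by rw [hμt]) hprod) (not_lt.2 (hmin μt qt ⟨⟨?_, ?_⟩, ⟨?_, ?_, ?_⟩, ?_, hμt0⟩))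
    · intro z
      have := μ'.2.1 z; have := hμ0 z
      rw [hμt]; positivity
    · rw [hμt]
      simp only []
      rw [Finset.sum_add_distrib, ← Finset.mul_sum, ← Finset.mul_sum, hμ1, μ'.2.2]; ring
    · intro z w
      rw [hqt]
      simp only []
      have := μ'.2.1 z; have := hμ0 z; have := hq.1 z w; have := hq'.1 z w
      split_ifs with hz
      · have := hμtp z hz
        positivity
      · assumption
    · intro z
      rw [hqt]
      simp only []
      split_ifs with hz
      · rw [← Finset.sum_div, Finset.sum_add_distrib, ← Finset.mul_sum, ← Finset.mul_sum,
          ← Finset.mul_sum, ← Finset.mul_sum, hq.2.1, hq'.2.1, div_eq_one_iff_eq (hμtp z hz).ne', hμt]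
        ring
      · exact hq'.2.1 z
    · intro z w hne
      by_contra hzw
      apply hne
      have e1 : q z w = 0 := by by_contra h; exact hzw (hq.2.2 z w h)
      have e2 : q' z w = 0 := by by_contra h; exact hzw (hq'.2.2 z w h)
      rw [hqt]; simp [e1, e2]
    · intro y
      rw [Finset.sum_congr rfl fun x _ => hprod x y, Finset.sum_add_distrib, ← Finset.mul_sum,
        ← Finset.mul_sum, hi y, hi' y, hμt]
  -- some point of the support
  obtain ⟨a, ha⟩ : ∃ a, 0 < μ a := by
    by_contra! h
    have : ∑ z, μ z ≤ 0 := Finset.sum_nonpos fun z _ => h z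
    linarith
  have haF : a.1.1 ∈ F := by
    by_contra h
    exact ha.ne' (hs a h)
  have hr := hF.2.2 (zp G a) (zm G z) ⟨_, haF, zp_mem G a⟩ ⟨_, hz, zm_mem G z⟩
  rw [SimpleGraph.reachable_iff_reflTransGen] at hr
  have key : ∃ b, 0 < μ b ∧ zp G b = zm G z := by
    generalize zm G z = x at hr
    induction hr with
    | refl => exact ⟨a, ha, rfl⟩
    | @tail y y' _ hyy ih =>
      obtain ⟨b, hb, hby⟩ := ih
      have hyF : s(y, y') ∈ F := by
        have := (SimpleGraph.fromEdgeSet_adj _).1 hyy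
        exact_mod_cast this.1
      obtain ⟨c, hc1, hc2, hc3⟩ := exists_lift G y y' (hF.1 hyF)
      exact ⟨c, hcl b c hb (hc1 ▸ hyF) (by rw [hby, hc2]), hc3⟩
  obtain ⟨b, hb, hbz⟩ := key
  exact hcl b z hb hz hbz

end Aux

section Aux2
variable {V : Type} [Fintype V] [LinearOrder V]
set_option linter.unusedSectionVars false

lemma Feas_iff (G : SimpleGraph V) [DecidableRel G.Adj] (F : Finset (Sym2 V))
    (μ : ProbMeas (VSet G)) (q : VSet G → VSet G → ℝ) (hq : q ∈ TS G) (hi : Invariant μ.1 q)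
    (hs : ∀ z : VSet G, μ.1 z ≠ 0 → z.1.1 ∈ F) : Feas G F μ.1 q :=
  ⟨μ.2, hq, hi, fun z hz => by by_contra h; exact hz (hs z h)⟩

lemma Lam_inf_eq (G : SimpleGraph V) [DecidableRel G.Adj] (hG : G.Connected) (v₁ : V) (δ : ℝ)
    (hδ : 0 < δ) (S0 : Set (Finset (Sym2 V))) (hS0sub : S0 ⊆ scrS G v₁)
    (F0 : Finset (Sym2 V)) (μ0 : ProbMeas (VSet G)) (q0 : VSet G → VSet G → ℝ)
    (hF0 : F0 ∈ S0) (hf0 : Feas G F0 μ0.1 q0)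
    (hmin : ∀ F ∈ S0, ∀ μ q, Feas G F μ q → JJ (pS G δ F0) μ0.1 q0 ≤ JJ (pS G δ F) μ q) :
    sInf (Lam G v₁ δ S0 '' CC G S0) = ((JJ (pS G δ F0) μ0.1 q0 : ℝ) : EReal) := by
  have hs0 : ∀ z : VSet G, μ0.1 z ≠ 0 → z.1.1 ∈ F0 := fun z hz => by
    by_contra h; exact hz (hf0.2.2.2 z h)
  apply le_antisymm
  · refine (sInf_le (Set.mem_image_of_mem _ (show μ0 ∈ CC G S0 from ⟨F0, hF0, hs0⟩))).trans ?_
    obtain ⟨Es, hEs, k, hk⟩ := exists_seq G hG v₁ F0 (hS0sub hF0)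
    have hne : ∀ j, (Es j).Nonempty := fun j => by
      rw [← Finset.card_pos, hEs.2.1 j]; omega
    choose μ' q' hq' hi' hp' h0' _ using fun j => unif G (Es j) (hEs.1 j) (hne j)
    have hmu : ∀ j, ∃ x : ProbMeas (VSet G) × (VSet G → VSet G → ℝ), x.2 ∈ TS G ∧
        Invariant x.1.1 x.2 ∧ (∀ z, x.1.1 z ≠ 0 → z.1.1 ∈ Es j) ∧ (j = k → x = (μ0, q0)) := by
      intro j
      by_cases hj : j = k
      · exact ⟨(μ0, q0), hf0.2.1, hf0.2.2.1, fun z hz => by rw [hj, hk]; exact hs0 z hz, fun _ => rfl⟩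
      · exact ⟨(μ' j, q' j), hq' j, hi' j, fun z hz => by
          by_contra h; exact hz (h0' j z h), fun h => absurd h hj⟩
    choose x hx1 hx2 hx3 hx4 using hmu
    have hxk := hx4 k rfl
    apply sInf_le
    refine ⟨fun j => (x j).1, fun j => if j = k then 1 else 0, Es, fun j => (x j).2, hEs,
      fun j => by beta_reduce; split_ifs <;> simp, ?_, by simp, hx3, ?_, hx1, hx2, ?_⟩
    · intro j hj
      beta_reduce
      rw [if_neg]
      rintro rfl
      rw [hk] at hj
      exact hj hF0
    · intro z
      simp [hxk]
    · rw [Finset.sum_eq_single k]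
      · rw [relEntInt_eq G δ hδ _ _ _ (hx1 k), hk]; simp [hxk]
      · intro j _ hj; simp [hj]
      · simp
  · apply le_sInf
    rintro _ ⟨μ, _, rfl⟩
    apply le_sInf
    rintro c ⟨μs, r, Es, qs, hEs, hr0, hrS, hr1, hsup, _, hqs, hinv, rfl⟩
    rw [Finset.sum_congr rfl fun k _ => by
      rw [relEntInt_eq G δ hδ _ _ _ (hqs k), ← EReal.coe_mul], ← coe_fsum, EReal.coe_le_coe_iff]
    calc JJ (pS G δ F0) μ0.1 q0 = ∑ k, r k * JJ (pS G δ F0) μ0.1 q0 := by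
          rw [← Finset.sum_mul, hr1, one_mul]
      _ ≤ _ := by
          refine Finset.sum_le_sum fun k _ => ?_
          by_cases hk : Es k ∈ S0
          · exact mul_le_mul_of_nonneg_left
              (hmin _ hk _ _ (Feas_iff G _ _ _ (hqs k) (hinv k) (hsup k))) (hr0 k)
          · rw [hrS k hk]; simp

lemma bd_le (G : SimpleGraph V) [DecidableRel G.Adj] (δ : ℝ)
    (hδ : 0 < δ) (m : ℝ) (F : Finset (Sym2 V))
    (hmin : ∀ μ q, Feas G F μ q → m ≤ JJ (pS G δ F) μ q)
    (μ : ProbMeas (VSet G)) (hs : ∀ z : VSet G, μ.1 z ≠ 0 → z.1.1 ∈ F) :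
    (m : EReal) ≤ Lam1 G μ + ((BB G δ F μ.1 : ℝ) : EReal) := by
  have h : ((m - BB G δ F μ.1 : ℝ) : EReal) ≤ Lam1 G μ := by
    apply le_sInf
    rintro c ⟨q, hq, hi, rfl⟩
    rw [relEntInt_eq G 1 one_pos _ _ _ hq, EReal.coe_le_coe_iff]
    have h1 := hmin _ _ (Feas_iff G F μ q hq hi hs)
    rw [cost_eq G δ hδ F μ q hq hs hi] at h1
    linarith
  calc (m : EReal) = ((m - BB G δ F μ.1 : ℝ) : EReal) + ((BB G δ F μ.1 : ℝ) : EReal) := by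
        rw [← EReal.coe_add]; congr 1; ring
    _ ≤ _ := by gcongr

lemma bd_ge (G : SimpleGraph V) [DecidableRel G.Adj] (δ : ℝ)
    (hδ : 0 < δ) (F : Finset (Sym2 V)) (μ : ProbMeas (VSet G)) (q : VSet G → VSet G → ℝ)
    (hf : Feas G F μ.1 q) :
    Lam1 G μ + ((BB G δ F μ.1 : ℝ) : EReal) ≤ ((JJ (pS G δ F) μ.1 q : ℝ) : EReal) := by
  have hs : ∀ z : VSet G, μ.1 z ≠ 0 → z.1.1 ∈ F := fun z hz => by
    by_contra h; exact hz (hf.2.2.2 z h)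
  rw [cost_eq G δ hδ F μ q hf.2.1 hs hf.2.2.1, EReal.coe_add]
  have : Lam1 G μ ≤ ((JJ (pS G 1 ∅) μ.1 q : ℝ) : EReal) :=
    sInf_le ⟨q, hf.2.1, hf.2.2.1, (relEntInt_eq G 1 one_pos _ _ _ hf.2.1).symm⟩
  gcongr

end Aux2

/-- Boundary expression for `inf_{μ ∈ 𝒞(𝒮₀)} Λ_{δ,𝒮₀}(μ)`, with
attainment at a measure charging the boundary when `𝒮₀ ≠ 𝒮`. -/
theorem orrw_alpha_boundary_expression {V : Type} [Fintype V] [LinearOrder V]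
    (G : SimpleGraph V) [DecidableRel G.Adj] (hG : G.Connected)
    (hV : 3 ≤ Fintype.card V) (v₁ : V) (δ : ℝ) (hδ : 0 < δ)
    (S0 : Set (Finset (Sym2 V))) (hS0ne : S0.Nonempty) (hS0sub : S0 ⊆ scrS G v₁)
    (hS0dec : DecreasingIn G v₁ S0) :
    sInf (Lam G v₁ δ S0 '' CC G S0) =
      sInf { c : EReal |
        ∃ (μ : ProbMeas (VSet G)) (F : Finset (Sym2 V)),
          F ∈ S0 ∧ (∀ z : VSet G, μ.1 z ≠ 0 → z.1.1 ∈ F) ∧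
          c = Lam1 G μ + ((∑ z : VSet G,
            if z.1.1 ∈ bdry G F then
              μ.1 z * Real.log
                (((outDeg G z : ℝ) - (outDegIn G F z : ℝ) + (outDegIn G F z : ℝ) * δ) /
                  ((outDeg G z : ℝ) * δ))
            else 0 : ℝ) : EReal) } ∧
    (S0 ≠ scrS G v₁ →
      ∃ (μ : ProbMeas (VSet G)) (F : Finset (Sym2 V)),
        F ∈ S0 ∧ (∀ z : VSet G, μ.1 z ≠ 0 → z.1.1 ∈ F) ∧
        (0 : ℝ) < (∑ z : VSet G, if z.1.1 ∈ bdry G F then μ.1 z else 0) ∧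
        sInf (Lam G v₁ δ S0 '' CC G S0) =
          Lam1 G μ + ((∑ z : VSet G,
            if z.1.1 ∈ bdry G F then
              μ.1 z * Real.log
                (((outDeg G z : ℝ) - (outDegIn G F z : ℝ) + (outDegIn G F z : ℝ) * δ) /
                  ((outDeg G z : ℝ) * δ))
            else 0 : ℝ) : EReal)) := by
  obtain ⟨F0, m0, q0, hF0, hf0, hmin⟩ := exists_min G v₁ δ S0 hS0ne hS0sub
  obtain ⟨μ0, hμ0⟩ : ∃ μ0 : ProbMeas (VSet G), μ0.1 = m0 := ⟨⟨m0, hf0.1⟩, rfl⟩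
  subst hμ0
  have hs0 : ∀ z : VSet G, μ0.1 z ≠ 0 → z.1.1 ∈ F0 := fun z hz => by
    by_contra h; exact hz (hf0.2.2.2 z h)
  have hLam := Lam_inf_eq G hG v₁ δ hδ S0 hS0sub F0 μ0 q0 hF0 hf0 hmin
  have hval : Lam1 G μ0 + ((BB G δ F0 μ0.1 : ℝ) : EReal) =
      ((JJ (pS G δ F0) μ0.1 q0 : ℝ) : EReal) :=
    le_antisymm (bd_ge G δ hδ F0 μ0 q0 hf0) (bd_le G δ hδ _ F0 (hmin F0 hF0) μ0 hs0)
  rw [hLam]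
  refine ⟨le_antisymm ?_ ?_, ?_⟩
  · apply le_sInf
    rintro c ⟨μ, F, hF, hs, rfl⟩
    exact bd_le G δ hδ _ F (hmin F hF) μ hs
  · exact sInf_le ⟨μ0, F0, hF0, hs0, hval.symm⟩
  · intro hne
    refine ⟨μ0, F0, hF0, hs0, ?_, hval.symm⟩
    have hE := edge_mem_scrS G hG v₁ F0 (hS0sub hF0)
    have hF0E : F0 ≠ G.edgeFinset := by
      intro h
      apply hne
      refine Set.Subset.antisymm hS0sub fun F hF => ?_
      exact hS0dec F G.edgeFinset hF hE hF.1 (h ▸ hF0)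
    obtain ⟨e, heE, heF, e', he', v, hv, hv'⟩ :=
      grow G v₁ _ F0 hE (hS0sub hF0).1 hF0E (hS0sub hF0).2.1
    have hb : e' ∈ bdry G F0 := by
      rw [bdry, Finset.mem_filter]
      exact ⟨he', e, Finset.mem_sdiff.2 ⟨heE, heF⟩, v, hv', hv⟩
    refine Finset.sum_pos' (fun z _ => ?_) ⟨(⟨e', (hS0sub hF0).1 he'⟩, true), Finset.mem_univ _, ?_⟩
    · split_ifs
      · exact μ0.2.1 z
      · exact le_rfl
    · rw [if_pos hb]
      exact full_supp G v₁ δ hδ F0 (hS0sub hF0) μ0.1 q0 hf0 (hmin F0 hF0) _ he'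

end ORRW
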